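/- Let f : ℝ² → ℝ be of class C² satisfying (i) D²f(p)(q,q) > 0 for all p, q ∈ ℝ² with q ≠ 0, and (ii) there is a constant λ > 0 with D²f(p)(q,q) ≤ λ · (ln(2+|p|)/(1+|p|)) · |q|² for all p, q ∈ ℝ². Let u ∈ C²(ℝ²) solve div[Df(∇u)] = 0 on ℝ², and suppose there are constants 0 ≤ m < 1, K > 0 with |∂₁u(x)| ≤ K(|∂₂u(x)|^m + 1) for all x ∈ ℝ². Then ∇∂₁u ≡ 0 on ℝ², i.e. ∂₁u is a constant function. -/

import Mathlib

open Real MeasureTheory Metric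
open scoped ENNReal

noncomputable section

/-- `ℝ²` with its Euclidean structure. -/
abbrev E2 : Type := EuclideanSpace ℝ (Fin 2)

/-- The `i`-th standard basis vector of `ℝ²`. -/
def ee (i : Fin 2) : E2 := EuclideanSpace.single i 1

/-- The Hessian bilinear form `D²f(p)(q,q)`. -/
def Hess (f : E2 → ℝ) (p q : E2) : ℝ := iteratedFDeriv ℝ 2 f p ![q, q]

/-- The partial derivative `∂ᵢu(x)`. -/
def pd (u : E2 → ℝ) (i : Fin 2) (x : E2) : ℝ := fderiv ℝ u x (ee i)

/-- The equation `div [Df(∇u)] = 0`, i.e. `∑ i, ∂ᵢ[(∂f/∂pᵢ)(∇u(x))] = 0` on `ℝ²`. -/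
def solves (f u : E2 → ℝ) : Prop :=
  ∀ x : E2, ∑ i : Fin 2, fderiv ℝ (fun y => fderiv ℝ f (gradient u y) (ee i)) x (ee i) = 0

/-!
The function `w = ∂₁u` is a weak solution of `div (B ∇w) = 0` with `B = D²f(∇u)`. Suppose
`B(q, q) ≤ h(w) |q|²` with `h` integrable on `ℝ`. Then the primitive `g` of `h` is bounded, and the
Caccioppoli inequality with test function `η² g(w)` reads
`∫ η² h(w) B(∇w, ∇w) ≤ 4 ‖h‖₁² ∫ |∇η|²`. In the plane there are cutoff functions `η` with
arbitrarily small Dirichlet integral, so `h(w) B(∇w, ∇w)` vanishes, and `∇w = 0` because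
`D²f > 0`.

Such an `h` exists: if `|w| ≤ K (|∇u|^m + 1)` with `m < 1`, then `ln(2 + |∇u|) / (1 + |∇u|)` is at
most a constant times `(1 + |w|)^(-r)` for some `r > 1`.
-/

open scoped InnerProductSpace Gradient

section DivergenceFree

lemma integrable_mul_of_hasCompactSupport {X : Type*} [TopologicalSpace X] [MeasurableSpace X]
    [OpensMeasurableSpace X] {μ : Measure X} [IsFiniteMeasureOnCompacts μ] {a b : X → ℝ}
    (ha : Continuous a) (hb : Continuous b) (hbc : HasCompactSupport b) :
    Integrable (fun x => a x * b x) μ :=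
  (ha.mul hb).integrable_of_hasCompactSupport hbc.mul_left

variable {E ι : Type*} [NormedAddCommGroup E] [NormedSpace ℝ E]

lemma continuous_fderiv_apply_const {φ : E → ℝ} (hφ : ContDiff ℝ 1 φ) (v : E) :
    Continuous fun x => fderiv ℝ φ x v :=
  (hφ.continuous_fderiv one_ne_zero).clm_apply continuous_const

variable [MeasurableSpace E] [BorelSpace E] {μ : Measure E}

lemma hasDerivAt_integral_comp_add_smul_mul [IsFiniteMeasureOnCompacts μ] {a b : E → ℝ}
    (ha : ContDiff ℝ 1 a) (hb : Continuous b) (hbc : HasCompactSupport b) (e : E) :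
    HasDerivAt (fun t : ℝ => ∫ x, a (x + t • e) * b x ∂μ) (∫ x, fderiv ℝ a x e * b x ∂μ) 0 := by
  have hcont (t : ℝ) : Continuous fun x => a (x + t • e) :=
    ha.continuous.comp (continuous_add_const _)
  have ha' := continuous_fderiv_apply_const ha e
  have ha'_joint : Continuous fun z : ℝ × E => fderiv ℝ a (z.2 + z.1 • e) e :=
    ha'.comp (by fun_prop)
  obtain ⟨M, hM⟩ := ((isCompact_Icc (a := (-1 : ℝ)) (b := 1)).prod
    hbc.isCompact).exists_bound_of_continuousOn ha'_joint.continuousOn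
  have hbound (x : E) (t : ℝ) (ht : t ∈ Set.Icc (-1 : ℝ) 1) :
      ‖fderiv ℝ a (x + t • e) e * b x‖ ≤ M * ‖b x‖ := by
    by_cases hx : x ∈ tsupport b
    · rw [norm_mul]
      exact mul_le_mul_of_nonneg_right (hM (t, x) ⟨ht, hx⟩) (norm_nonneg _)
    · simp only [image_eq_zero_of_notMem_tsupport hx, mul_zero, norm_zero, le_refl]
  have hderiv (x : E) (t : ℝ) :
      HasDerivAt (fun t : ℝ => a (x + t • e) * b x) (fderiv ℝ a (x + t • e) e * b x) t := by
    have hline : HasDerivAt (fun t : ℝ => x + t • e) e t := by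
      simpa using ((hasDerivAt_id t).smul_const e).const_add x
    exact ((ha.differentiable one_ne_zero _).hasFDerivAt.comp_hasDerivAt t hline).mul_const _
  have hmain := (hasDerivAt_integral_of_dominated_loc_of_deriv_le (x₀ := (0 : ℝ))
    (F' := fun t x => fderiv ℝ a (x + t • e) e * b x)
    (Icc_mem_nhds neg_one_lt_zero one_pos)
    (.of_forall fun t => (integrable_mul_of_hasCompactSupport (hcont t) hb hbc).1)
    (integrable_mul_of_hasCompactSupport (hcont 0) hb hbc)
    (integrable_mul_of_hasCompactSupport (ha'.comp (continuous_add_const _)) hb hbc).1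
    (ae_of_all μ hbound) ((hb.integrable_of_hasCompactSupport hbc).norm.const_mul M)
    (ae_of_all μ fun x t _ => hderiv x t)).2
  simpa only [zero_smul, add_zero] using hmain

variable [FiniteDimensional ℝ E] [μ.IsAddHaarMeasure] [Fintype ι]

lemma integral_sum_mul_fderiv_eq_zero {V : ι → E → ℝ} {b : ι → E}
    (hV : ∀ i, ContDiff ℝ 1 (V i)) (hdiv : ∀ x, ∑ i, fderiv ℝ (V i) x (b i) = 0)
    {φ : E → ℝ} (hφ : ContDiff ℝ 1 φ) (hφc : HasCompactSupport φ) :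
    ∫ x, ∑ i, V i x * fderiv ℝ φ x (b i) ∂μ = 0 := by
  have hφ' := continuous_fderiv_apply_const hφ
  have hint (i : ι) : Integrable (fun x => V i x * fderiv ℝ φ x (b i)) μ :=
    integrable_mul_of_hasCompactSupport (hV i).continuous (hφ' _) (hφc.fderiv_apply ℝ _)
  have hint' (i : ι) : Integrable (fun x => fderiv ℝ (V i) x (b i) * φ x) μ :=
    integrable_mul_of_hasCompactSupport (continuous_fderiv_apply_const (hV i) _) hφ.continuous hφc
  have hparts (i : ι) : ∫ x, V i x * fderiv ℝ φ x (b i) ∂μ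
      = -∫ x, fderiv ℝ (V i) x (b i) * φ x ∂μ :=
    integral_mul_fderiv_eq_neg_fderiv_mul_of_integrable (hint' i) (hint i)
      (integrable_mul_of_hasCompactSupport (hV i).continuous hφ.continuous hφc)
      (fun x _ => (hV i).differentiable one_ne_zero x)
      (fun x _ => hφ.differentiable one_ne_zero x)
  calc ∫ x, ∑ i, V i x * fderiv ℝ φ x (b i) ∂μ
      = -∫ x, (∑ i, fderiv ℝ (V i) x (b i)) * φ x ∂μ := by
        simp_rw [Finset.sum_mul]
        rw [integral_finsetSum _ fun i _ => hint i, integral_finsetSum _ fun i _ => hint' i,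
          ← Finset.sum_neg_distrib, Finset.sum_congr rfl fun i _ => hparts i]
    _ = 0 := by simp only [hdiv, zero_mul, integral_zero, neg_zero]

/-- `V` is only `C¹`, so its divergence cannot be differentiated; instead, the weak form is
differentiated along translations of `V`. -/
lemma integral_sum_fderiv_mul_fderiv_eq_zero {V : ι → E → ℝ} {b : ι → E}
    (hV : ∀ i, ContDiff ℝ 1 (V i)) (hdiv : ∀ x, ∑ i, fderiv ℝ (V i) x (b i) = 0) (e : E)
    {φ : E → ℝ} (hφ : ContDiff ℝ 1 φ) (hφc : HasCompactSupport φ) :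
    ∫ x, ∑ i, fderiv ℝ (V i) x e * fderiv ℝ φ x (b i) ∂μ = 0 := by
  have hφ' := continuous_fderiv_apply_const hφ
  have hVt (t : ℝ) (i : ι) : ContDiff ℝ 1 fun x => V i (x + t • e) :=
    (hV i).comp (contDiff_id.add contDiff_const)
  have hzero (t : ℝ) : ∑ i, ∫ x, V i (x + t • e) * fderiv ℝ φ x (b i) ∂μ = 0 := by
    rw [← integral_finsetSum _ fun i _ => integrable_mul_of_hasCompactSupport
      (hVt t i).continuous (hφ' _) (hφc.fderiv_apply ℝ _)]
    refine integral_sum_mul_fderiv_eq_zero (hVt t) (fun x => ?_) hφ hφc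
    simpa only [fderiv_comp_add_right] using hdiv (x + t • e)
  have hderiv := HasDerivAt.fun_sum (u := Finset.univ) fun i _ =>
    hasDerivAt_integral_comp_add_smul_mul (μ := μ) (hV i) (hφ' (b i)) (hφc.fderiv_apply ℝ _) e
  simp_rw [hzero] at hderiv
  rw [integral_finsetSum _ fun i _ => integrable_mul_of_hasCompactSupport
    (continuous_fderiv_apply_const (hV i) e) (hφ' _)
    (hφc.fderiv_apply ℝ _)]
  exact hderiv.unique (hasDerivAt_const 0 0)

end DivergenceFree

section WeakSolution

lemma fderiv_apply_const {E F G : Type*} [NormedAddCommGroup E] [NormedSpace ℝ E]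
    [NormedAddCommGroup F] [NormedSpace ℝ F] [NormedAddCommGroup G] [NormedSpace ℝ G]
    {L : E → F →L[ℝ] G} {x : E} (hL : DifferentiableAt ℝ L x) (v : F) (e : E) :
    fderiv ℝ (fun y => L y v) x e = fderiv ℝ L x e v := by
  simp [fderiv_clm_apply hL (differentiableAt_const v)]

lemma fderiv_fderiv_comm {E : Type*} [NormedAddCommGroup E] [NormedSpace ℝ E] {f : E → ℝ}
    (hf : ContDiff ℝ 2 f) (x p q : E) :
    fderiv ℝ (fderiv ℝ f) x p q = fderiv ℝ (fderiv ℝ f) x q p :=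
  (hf.contDiffAt.isSymmSndFDerivAt (by simp)).eq p q

variable {E : Type*} [NormedAddCommGroup E] [InnerProductSpace ℝ E] [FiniteDimensional ℝ E]

lemma contDiff_gradient {u : E → ℝ} {n m : WithTop ℕ∞} (hu : ContDiff ℝ n u) (hmn : m + 1 ≤ n) :
    ContDiff ℝ m (∇ u) :=
  (InnerProductSpace.toDual ℝ E).symm.contDiff.comp (hu.fderiv_right hmn)

lemma continuous_gradient {u : E → ℝ} (hu : ContDiff ℝ 1 u) : Continuous (∇ u) :=
  (contDiff_gradient (m := 0) hu (by norm_num)).continuous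

lemma hasCompactSupport_gradient {φ : E → ℝ} (hφ : HasCompactSupport φ) :
    HasCompactSupport (∇ φ) :=
  (hφ.fderiv ℝ).comp_left (map_zero (InnerProductSpace.toDual ℝ E).symm)

lemma gradient_eq_zero_iff {φ : E → ℝ} {x : E} : ∇ φ x = 0 ↔ fderiv ℝ φ x = 0 := by
  rw [gradient, LinearIsometryEquiv.map_eq_zero_iff]

lemma sum_fderiv_smul_eq_gradient {ι : Type*} [Fintype ι] (b : OrthonormalBasis ι ℝ E)
    (φ : E → ℝ) (x : E) : ∑ i, fderiv ℝ φ x (b i) • b i = ∇ φ x := by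
  simpa only [inner_gradient_right, RCLike.conj_to_real] using b.sum_repr' (∇ φ x)

lemma fderiv_gradient_apply {u : E → ℝ} (hu : ContDiff ℝ 2 u) (x e : E) :
    fderiv ℝ (∇ u) x e = ∇ (fun y => fderiv ℝ u y e) x := by
  have hdu : DifferentiableAt ℝ (fderiv ℝ u) x :=
    (hu.fderiv_right (m := 1) (by norm_num)).differentiable one_ne_zero x
  have hdgrad : DifferentiableAt ℝ (∇ u) x :=
    (contDiff_gradient (m := 1) hu (by norm_num)).differentiable one_ne_zero x
  refine ext_inner_right ℝ fun v => ?_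
  calc ⟪fderiv ℝ (∇ u) x e, v⟫_ℝ
      = fderiv ℝ (fun y => ⟪∇ u y, v⟫_ℝ) x e := by
        rw [fderiv_inner_apply ℝ hdgrad (differentiableAt_const v)]
        simp
    _ = fderiv ℝ (fderiv ℝ u) x e v := by
        simp only [inner_gradient_left, fderiv_apply_const hdu]
    _ = fderiv ℝ (fun y => fderiv ℝ u y e) x v := by
        rw [fderiv_fderiv_comm hu, fderiv_apply_const hdu]
    _ = ⟪∇ (fun y => fderiv ℝ u y e) x, v⟫_ℝ := inner_gradient_left.symm

variable [MeasurableSpace E] [BorelSpace E]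

/-- `w` is a weak solution of `div (B ∇w) = 0`. The coefficients are given as a field of bilinear
forms, and the test functions are only `C¹`, so that functions of `w` itself may be used. -/
def IsWeakSolution (B : E → E →L[ℝ] E →L[ℝ] ℝ) (w : E → ℝ) : Prop :=
  ∀ φ : E → ℝ, ContDiff ℝ 1 φ → HasCompactSupport φ → ∫ x, B x (∇ w x) (∇ φ x) = 0

theorem isWeakSolution_fderiv_apply {ι : Type*} [Fintype ι] (b : OrthonormalBasis ι ℝ E)
    {f u : E → ℝ} (hf : ContDiff ℝ 2 f) (hu : ContDiff ℝ 2 u)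
    (hdiv : ∀ x, ∑ i, fderiv ℝ (fun y => fderiv ℝ f (∇ u y) (b i)) x (b i) = 0) (e : E) :
    IsWeakSolution (fun x => fderiv ℝ (fderiv ℝ f) (∇ u x)) (fun x => fderiv ℝ u x e) := by
  intro φ hφ hφc
  have hDf : ContDiff ℝ 1 (fderiv ℝ f) := hf.fderiv_right (by norm_num)
  have hgrad : ContDiff ℝ 1 (∇ u) := contDiff_gradient hu (by norm_num)
  have hchain (x v : E) : fderiv ℝ (fun y => fderiv ℝ f (∇ u y) v) x e
      = fderiv ℝ (fderiv ℝ f) (∇ u x) (∇ (fun y => fderiv ℝ u y e) x) v := by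
    have hDfu := (hDf.differentiable one_ne_zero (∇ u x)).hasFDerivAt.comp x
      (hgrad.differentiable one_ne_zero x).hasFDerivAt
    rw [← fderiv_gradient_apply hu]
    exact (fderiv_apply_const hDfu.differentiableAt v e).trans (by rw [hDfu.fderiv]; rfl)
  rw [← integral_sum_fderiv_mul_fderiv_eq_zero (μ := volume)
    (fun i => (hDf.comp hgrad).clm_apply (contDiff_const (c := b i))) hdiv e hφ hφc]
  refine integral_congr_ae (ae_of_all _ fun x => ?_)
  simp only [Function.comp_apply, hchain]
  simp_rw [← sum_fderiv_smul_eq_gradient b φ x, map_sum, map_smul, smul_eq_mul, mul_comm]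

end WeakSolution

section Cutoff

lemma norm_sum_sq_of_pairwise_inner_eq_zero {E ι : Type*} [NormedAddCommGroup E]
    [InnerProductSpace ℝ E] (s : Finset ι) {v : ι → E}
    (hv : Pairwise fun i j => ⟪v i, v j⟫_ℝ = 0) : ‖∑ i ∈ s, v i‖ ^ 2 = ∑ i ∈ s, ‖v i‖ ^ 2 := by
  simp only [← real_inner_self_eq_norm_sq, sum_inner, inner_sum]
  exact Finset.sum_congr rfl fun i hi =>
    Finset.sum_eq_single i (fun _ _ hji => hv hji) fun h => absurd hi h

variable {E : Type*} [NormedAddCommGroup E] [InnerProductSpace ℝ E] [FiniteDimensional ℝ E]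

lemma gradient_comp_smul (φ : E → ℝ) (c : ℝ) (x : E) :
    ∇ (fun y => φ (c • y)) x = c • ∇ φ (c • x) := by
  simp only [gradient, fderiv_comp_smul, map_smul]

/-- A bump function equal to `1` on the ball of radius `R` and vanishing outside the ball of
radius `2 R`, defined by scaling from a fixed profile. -/
def scaledBump (R : ℝ) (x : E) : ℝ :=
  (⟨1, 2, one_pos, one_lt_two⟩ : ContDiffBump (0 : E)) (R⁻¹ • x)

lemma contDiff_scaledBump (R : ℝ) : ContDiff ℝ 1 (scaledBump R : E → ℝ) :=
  ContDiffBump.contDiff _ |>.comp (contDiff_const_smul _)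

variable {R : ℝ} {x : E}

lemma scaledBump_eq_one (hR : 0 < R) (hx : ‖x‖ ≤ R) : scaledBump R x = 1 := by
  refine ContDiffBump.one_of_mem_closedBall _ ?_
  rwa [mem_closedBall_zero_iff, norm_smul, norm_inv, norm_of_nonneg hR.le, inv_mul_le_iff₀ hR,
    mul_one]

lemma scaledBump_eq_zero (hR : 0 < R) (hx : 2 * R ≤ ‖x‖) : scaledBump R x = 0 := by
  refine ContDiffBump.zero_of_le_dist _ ?_
  rwa [dist_zero_right, norm_smul, norm_inv, norm_of_nonneg hR.le, le_inv_mul_iff₀ hR, mul_comm]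

lemma hasCompactSupport_scaledBump (hR : 0 < R) : HasCompactSupport (scaledBump R : E → ℝ) :=
  ContDiffBump.hasCompactSupport _ |>.comp_smul (inv_ne_zero hR.ne')

/-- On the boundary spheres this holds because `scaledBump R` attains its extrema there. -/
lemma gradient_scaledBump_eq_zero (hR : 0 < R) (hx : ‖x‖ ≤ R ∨ 2 * R ≤ ‖x‖) :
    ∇ (scaledBump R) x = 0 := by
  rw [gradient_eq_zero_iff]
  rcases hx with hx | hx
  · have hmax : IsLocalMax (scaledBump R) x := .of_forall fun _ =>
      (ContDiffBump.le_one _).trans (scaledBump_eq_one hR hx).ge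
    exact hmax.fderiv_eq_zero
  · have hmin : IsLocalMin (scaledBump R) x := .of_forall fun _ =>
      (scaledBump_eq_zero hR hx).le.trans (ContDiffBump.nonneg _)
    exact hmin.fderiv_eq_zero

lemma pairwise_inner_gradient_scaledBump_eq_zero (hR : 0 < R) (x : E) :
    Pairwise fun i j : ℕ =>
      ⟪∇ (scaledBump (2 ^ i * R)) x, ∇ (scaledBump (2 ^ j * R)) x⟫_ℝ = 0 := by
  intro i j hij
  wlog h : i < j generalizing i j
  · rw [real_inner_comm]
    exact this hij.symm (hij.lt_or_gt.resolve_left h)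
  rcases le_total ‖x‖ (2 ^ j * R) with hx | hx
  · rw [gradient_scaledBump_eq_zero (R := 2 ^ j * R) (by positivity) (.inl hx), inner_zero_right]
  · have hscale : 2 * (2 ^ i * R) ≤ 2 ^ j * R := by
      rw [← mul_assoc, ← pow_succ']
      gcongr
      exacts [one_le_two, h]
    rw [gradient_scaledBump_eq_zero (R := 2 ^ i * R) (by positivity) (.inr (hscale.trans hx)),
      inner_zero_left]

/-- A logarithmic cutoff function: the average of `N` bump functions at successive dyadic scales.
It equals `1` on the ball of radius `R`, and in the plane its Dirichlet integral is of order
`N⁻¹`. -/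
def logCutoff (R : ℝ) (N : ℕ) (x : E) : ℝ :=
  (N : ℝ)⁻¹ * ∑ k ∈ Finset.range N, scaledBump (2 ^ k * R) x

lemma contDiff_logCutoff (R : ℝ) (N : ℕ) : ContDiff ℝ 1 (logCutoff R N : E → ℝ) :=
  contDiff_const.mul (ContDiff.sum fun _ _ => contDiff_scaledBump _)

lemma hasCompactSupport_logCutoff (hR : 0 < R) (N : ℕ) :
    HasCompactSupport (logCutoff R N : E → ℝ) := by
  refine .intro (isCompact_closedBall 0 (2 ^ N * R)) fun x hx => ?_
  rw [mem_closedBall_zero_iff, not_le] at hx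
  refine mul_eq_zero_of_right _ (Finset.sum_eq_zero fun k hk => ?_)
  refine scaledBump_eq_zero (by positivity) (le_trans ?_ hx.le)
  rw [← mul_assoc, ← pow_succ']
  gcongr
  exacts [one_le_two, Finset.mem_range.1 hk]

lemma logCutoff_eq_one (hR : 0 < R) {N : ℕ} (hN : N ≠ 0) (hx : ‖x‖ ≤ R) :
    logCutoff R N x = 1 := by
  have hbump (k : ℕ) : scaledBump (2 ^ k * R) x = 1 :=
    scaledBump_eq_one (by positivity)
      (hx.trans (le_mul_of_one_le_left hR.le (one_le_pow₀ one_le_two)))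
  simp [logCutoff, hbump, hN]

lemma norm_gradient_logCutoff_sq (hR : 0 < R) (N : ℕ) (x : E) :
    ‖∇ (logCutoff R N) x‖ ^ 2
      = (N : ℝ)⁻¹ ^ 2 * ∑ k ∈ Finset.range N, ‖∇ (scaledBump (2 ^ k * R)) x‖ ^ 2 := by
  have hdiff (k : ℕ) : DifferentiableAt ℝ (scaledBump (2 ^ k * R)) x :=
    (contDiff_scaledBump _).differentiable one_ne_zero x
  have hgrad : ∇ (logCutoff R N) x
      = (N : ℝ)⁻¹ • ∑ k ∈ Finset.range N, ∇ (scaledBump (2 ^ k * R)) x := by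
    unfold logCutoff gradient
    rw [fderiv_const_mul (DifferentiableAt.fun_sum fun k _ => hdiff k),
      fderiv_fun_sum fun k _ => hdiff k, map_smul, map_sum]
  rw [hgrad, norm_smul, mul_pow, norm_eq_abs, sq_abs, norm_sum_sq_of_pairwise_inner_eq_zero _
    (pairwise_inner_gradient_scaledBump_eq_zero hR x)]

variable [MeasurableSpace E] [BorelSpace E]

lemma integral_norm_gradient_sq_comp_smul (hE : Module.finrank ℝ E = 2) (φ : E → ℝ) {c : ℝ}
    (hc : c ≠ 0) : ∫ x, ‖∇ (fun y => φ (c • y)) x‖ ^ 2 = ∫ x, ‖∇ φ x‖ ^ 2 := by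
  simp_rw [gradient_comp_smul, norm_smul, mul_pow, integral_const_mul]
  rw [Measure.integral_comp_smul volume (fun x => ‖∇ φ x‖ ^ 2) c, hE, norm_eq_abs, sq_abs,
    abs_of_nonneg (by positivity), smul_eq_mul, mul_inv_cancel_left₀ (by positivity)]

lemma integrable_norm_gradient_sq {η : E → ℝ} (hη : ContDiff ℝ 1 η) (hηc : HasCompactSupport η) :
    Integrable fun x => ‖∇ η x‖ ^ 2 :=
  ((continuous_gradient hη).norm.pow 2).integrable_of_hasCompactSupport
    ((hasCompactSupport_gradient hηc).mono fun _ hx h => hx (by simp [h]))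

lemma integral_norm_gradient_logCutoff_sq (hE : Module.finrank ℝ E = 2) (hR : 0 < R) (N : ℕ) :
    ∫ x : E, ‖∇ (logCutoff R N) x‖ ^ 2 = (N : ℝ)⁻¹ * ∫ x : E, ‖∇ (scaledBump 1) x‖ ^ 2 := by
  have hscale (k : ℕ) : ∫ x : E, ‖∇ (scaledBump (2 ^ k * R)) x‖ ^ 2
      = ∫ x : E, ‖∇ (scaledBump 1) x‖ ^ 2 := by
    rw [← integral_norm_gradient_sq_comp_smul hE (scaledBump 1)
      (inv_ne_zero (by positivity : 2 ^ k * R ≠ 0))]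
    simp only [scaledBump, inv_one, one_smul]
    rfl
  have hint (k : ℕ) : Integrable fun x : E => ‖∇ (scaledBump (2 ^ k * R)) x‖ ^ 2 :=
    integrable_norm_gradient_sq (contDiff_scaledBump _)
      (hasCompactSupport_scaledBump (by positivity))
  simp_rw [norm_gradient_logCutoff_sq hR, integral_const_mul]
  rw [integral_finsetSum _ fun k _ => hint k]
  simp only [hscale, Finset.sum_const, Finset.card_range, nsmul_eq_mul]
  rw [← mul_assoc, pow_two]
  congr 1
  simpa only [inv_inv] using mul_self_mul_inv (N : ℝ)⁻¹

theorem exists_cutoff_integral_norm_gradient_sq_le (hE : Module.finrank ℝ E = 2) (hR : 0 < R)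
    {ε : ℝ} (hε : 0 < ε) :
    ∃ η : E → ℝ, ContDiff ℝ 1 η ∧ HasCompactSupport η ∧ (∀ x, ‖x‖ ≤ R → η x = 1) ∧
      ∫ x, ‖∇ η x‖ ^ 2 ≤ ε := by
  set D := ∫ x : E, ‖∇ (scaledBump 1) x‖ ^ 2
  obtain ⟨N, hN⟩ := exists_nat_gt (D / ε)
  have hD : 0 ≤ D := integral_nonneg fun _ => sq_nonneg _
  have hN0 : (0 : ℝ) < N := (div_nonneg hD hε.le).trans_lt hN
  refine ⟨logCutoff R N, contDiff_logCutoff R N, hasCompactSupport_logCutoff hR N,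
    fun x => logCutoff_eq_one hR (Nat.cast_pos.1 hN0).ne', ?_⟩
  rw [integral_norm_gradient_logCutoff_sq hE hR, inv_mul_le_iff₀ hN0]
  exact ((div_lt_iff₀ hε).1 hN).le

end Cutoff

section Liouville

/-- The pointwise form of the Caccioppoli inequality below, with `a = η x`, `c = h (w x)`,
`γ = g (w x)`, `p = ∇ w x` and `q = ∇ η x`. -/
lemma sq_mul_apply_self_le {E : Type*} [NormedAddCommGroup E] [NormedSpace ℝ E]
    {b : E →L[ℝ] E →L[ℝ] ℝ} (hsymm : ∀ p q, b p q = b q p) (hnonneg : ∀ q, 0 ≤ b q q) {c : ℝ}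
    (hc : 0 ≤ c) (hb : ∀ q, b q q ≤ c * ‖q‖ ^ 2) {M γ : ℝ} (hγ : |γ| ≤ M) (a : ℝ) (p q : E) :
    a ^ 2 * (c * b p p) ≤
      2 * b p ((a ^ 2 * c) • p + (2 * a * γ) • q) + 4 * (M ^ 2 * ‖q‖ ^ 2) := by
  have hCS : b p q ^ 2 ≤ b p p * b q q := by
    have := LinearMap.BilinForm.apply_mul_apply_le_of_forall_zero_le b.toBilinForm hnonneg p q
    simpa [pow_two, hsymm q p] using this
  have hγ2 : γ ^ 2 ≤ M ^ 2 := sq_le_sq' (abs_le.1 hγ).1 (abs_le.1 hγ).2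
  set P := a ^ 2 * (c * b p p) with hP
  set Q := 4 * (M ^ 2 * ‖q‖ ^ 2) with hQ
  set X := 2 * a * γ * b p q with hX
  have hXPQ : X ^ 2 ≤ P * Q :=
    calc X ^ 2 = 4 * a ^ 2 * (γ ^ 2 * b p q ^ 2) := by rw [hX]; ring
      _ ≤ 4 * a ^ 2 * (M ^ 2 * (b p p * (c * ‖q‖ ^ 2))) := by
        gcongr
        exact hCS.trans (mul_le_mul_of_nonneg_left (hb q) (hnonneg p))
      _ = P * Q := by rw [hP, hQ]; ring
  have hPQ : 0 ≤ P + Q := by have := hnonneg p; positivity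
  have habs : |2 * X| ≤ P + Q := abs_le_of_sq_le_sq (by nlinarith [sq_nonneg (P - Q)]) hPQ
  have hexp : b p ((a ^ 2 * c) • p + (2 * a * γ) • q) = P + X := by
    simp only [map_add, map_smul, smul_eq_mul, hP, hX]
    ring
  rw [hexp]
  linarith [neg_le_of_abs_le habs]

variable {E : Type*} [NormedAddCommGroup E] [InnerProductSpace ℝ E] [FiniteDimensional ℝ E]

lemma gradient_sq_mul_comp {η w : E → ℝ} {g : ℝ → ℝ} {x : E} {g' : ℝ}
    (hη : DifferentiableAt ℝ η x) (hw : DifferentiableAt ℝ w x) (hg : HasDerivAt g g' (w x)) :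
    ∇ (fun y => η y ^ 2 * g (w y)) x
      = (η x ^ 2 * g') • ∇ w x + (2 * η x * g (w x)) • ∇ η x := by
  have hderiv := (hη.hasFDerivAt.pow 2).mul (hg.comp_hasFDerivAt x hw.hasFDerivAt)
  have hfderiv : fderiv ℝ (fun y => η y ^ 2 * g (w y)) x
      = (η x ^ 2 * g') • fderiv ℝ w x + (2 * η x * g (w x)) • fderiv ℝ η x := by
    refine hderiv.fderiv.trans ?_
    ext v
    simp only [Function.comp_apply, Nat.add_one_sub_one, pow_one, nsmul_eq_mul, Nat.cast_ofNat,
      add_apply, smul_apply, smul_eq_mul]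
    ring
  simp only [gradient, hfderiv, map_add, map_smul]

variable [MeasurableSpace E] [BorelSpace E] {B : E → E →L[ℝ] E →L[ℝ] ℝ} {w : E → ℝ} {h : ℝ → ℝ}

/-- The Caccioppoli inequality with test function `η ^ 2 * g ∘ w`. -/
theorem IsWeakSolution.integral_sq_mul_energy_le (hweak : IsWeakSolution B w)
    (hBc : Continuous B) (hsymm : ∀ x p q, B x p q = B x q p) (hnonneg : ∀ x q, 0 ≤ B x q q)
    (hw : ContDiff ℝ 1 w) {g : ℝ → ℝ} (hg : ∀ s, HasDerivAt g (h s) s) (hh : Continuous h)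
    (hh0 : ∀ s, 0 ≤ h s) {M : ℝ} (hgM : ∀ s, |g s| ≤ M)
    (hBh : ∀ x q, B x q q ≤ h (w x) * ‖q‖ ^ 2)
    {η : E → ℝ} (hη : ContDiff ℝ 1 η) (hηc : HasCompactSupport η) :
    ∫ x, η x ^ 2 * (h (w x) * B x (∇ w x) (∇ w x)) ≤ 4 * (M ^ 2 * ∫ x, ‖∇ η x‖ ^ 2) := by
  have hgC1 : ContDiff ℝ 1 g := by
    refine contDiff_one_iff_deriv.2 ⟨fun s => (hg s).differentiableAt, ?_⟩
    rwa [funext fun s => (hg s).deriv]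
  set φ : E → ℝ := fun x => η x ^ 2 * g (w x)
  have hφ : ContDiff ℝ 1 φ := (hη.pow 2).mul (hgC1.comp hw)
  have hφc : HasCompactSupport φ := hηc.mono fun _ hx h => hx (by simp [φ, h])
  have hgradw := continuous_gradient hw
  have hpair {v : E → E} (hv : Continuous v) : Continuous fun x => B x (∇ w x) (v x) :=
    (hBc.clm_apply hgradw).clm_apply hv
  have hintL : Integrable fun x => η x ^ 2 * (h (w x) * B x (∇ w x) (∇ w x)) :=
    ((hη.continuous.pow 2).mul ((hh.comp hw.continuous).mul (hpair hgradw)))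
      |>.integrable_of_hasCompactSupport (hηc.mono fun _ hx h => hx (by simp [h]))
  have hintφ : Integrable fun x => B x (∇ w x) (∇ φ x) :=
    (hpair (continuous_gradient hφ)).integrable_of_hasCompactSupport
      ((hasCompactSupport_gradient hφc).mono fun _ hx h => hx (by simp [h]))
  have hintη := ((integrable_norm_gradient_sq hη hηc).const_mul (M ^ 2)).const_mul 4
  calc ∫ x, η x ^ 2 * (h (w x) * B x (∇ w x) (∇ w x))
      ≤ ∫ x, 2 * B x (∇ w x) (∇ φ x) + 4 * (M ^ 2 * ‖∇ η x‖ ^ 2) := by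
        refine integral_mono hintL ((hintφ.const_mul 2).add hintη) fun x => ?_
        simp only [φ, gradient_sq_mul_comp (hη.differentiable one_ne_zero x)
          (hw.differentiable one_ne_zero x) (hg (w x))]
        exact sq_mul_apply_self_le (hsymm x) (hnonneg x) (hh0 _) (hBh x) (hgM _) _ _ _
    _ = 4 * (M ^ 2 * ∫ x, ‖∇ η x‖ ^ 2) := by
        rw [integral_add (hintφ.const_mul 2) hintη]
        simp only [integral_const_mul, hweak φ hφ hφc, mul_zero, zero_add]

lemma abs_intervalIntegral_le_integral {h : ℝ → ℝ} (hh0 : ∀ s, 0 ≤ h s) (hint : Integrable h)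
    (a b : ℝ) : |∫ t in a..b, h t| ≤ ∫ t, h t := by
  rw [← norm_eq_abs]
  calc ‖∫ t in a..b, h t‖ ≤ ∫ t in Set.uIoc a b, ‖h t‖ :=
        intervalIntegral.norm_integral_le_integral_norm_uIoc
    _ = ∫ t in Set.uIoc a b, h t := by simp only [norm_of_nonneg (hh0 _)]
    _ ≤ ∫ t, h t := setIntegral_le_integral hint (ae_of_all _ hh0)

lemma eq_zero_of_forall_integral_sq_mul_le (hE : Module.finrank ℝ E = 2) {Q : E → ℝ}
    (hQc : Continuous Q) (hQ0 : ∀ x, 0 ≤ Q x) {C : ℝ}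
    (hQ : ∀ η : E → ℝ, ContDiff ℝ 1 η → HasCompactSupport η →
      ∫ x, η x ^ 2 * Q x ≤ C * ∫ x, ‖∇ η x‖ ^ 2) (x : E) : Q x = 0 := by
  have hR : 0 < ‖x‖ + 1 := by positivity
  have hball : ∫ y in ball 0 (‖x‖ + 1), Q y = 0 := by
    refine le_antisymm (le_of_forall_pos_le_add fun ε hε => ?_)
      (integral_nonneg fun y => hQ0 y)
    obtain ⟨η, hη, hηc, hη1, hηε⟩ :=
      exists_cutoff_integral_norm_gradient_sq_le hE hR (div_pos hε (by positivity : 0 < |C| + 1))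
    have hint : Integrable fun y => η y ^ 2 * Q y :=
      ((hη.continuous.pow 2).mul hQc).integrable_of_hasCompactSupport
        (hηc.mono fun _ hx h => hx (by simp [h]))
    calc ∫ y in ball 0 (‖x‖ + 1), Q y = ∫ y in ball 0 (‖x‖ + 1), η y ^ 2 * Q y :=
          setIntegral_congr_fun measurableSet_ball fun y hy => by
            simp [hη1 y (mem_ball_zero_iff.1 hy).le]
      _ ≤ ∫ y, η y ^ 2 * Q y :=
          setIntegral_le_integral hint (ae_of_all _ fun y => mul_nonneg (sq_nonneg _) (hQ0 y))
      _ ≤ C * ∫ y, ‖∇ η y‖ ^ 2 := hQ η hη hηc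
      _ ≤ (|C| + 1) * (ε / (|C| + 1)) := by
          have : 0 ≤ ∫ y, ‖∇ η y‖ ^ 2 := integral_nonneg fun _ => sq_nonneg _
          gcongr
          linarith [le_abs_self C]
      _ = 0 + ε := by field_simp; ring
  have hae : Q =ᵐ[volume.restrict (ball 0 (‖x‖ + 1))] 0 :=
    (integral_eq_zero_iff_of_nonneg hQ0 ((hQc.locallyIntegrable.integrableOn_isCompact
      (isCompact_closedBall 0 (‖x‖ + 1))).mono_set ball_subset_closedBall)).1 hball
  exact Measure.eqOn_open_of_ae_eq hae isOpen_ball hQc.continuousOn continuousOn_const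
    (mem_ball_zero_iff.2 (lt_add_one _))

theorem IsWeakSolution.energy_eq_zero (hE : Module.finrank ℝ E = 2) (hweak : IsWeakSolution B w)
    (hBc : Continuous B) (hsymm : ∀ x p q, B x p q = B x q p) (hnonneg : ∀ x q, 0 ≤ B x q q)
    (hw : ContDiff ℝ 1 w) (hh : Continuous h) (hh0 : ∀ s, 0 ≤ h s) (hint : Integrable h)
    (hBh : ∀ x q, B x q q ≤ h (w x) * ‖q‖ ^ 2) (x : E) : B x (∇ w x) (∇ w x) = 0 := by
  have hgradw := continuous_gradient hw
  have henergy : h (w x) * B x (∇ w x) (∇ w x) = 0 := by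
    refine eq_zero_of_forall_integral_sq_mul_le hE (C := 4 * (∫ t, h t) ^ 2)
      (Q := fun x => h (w x) * B x (∇ w x) (∇ w x))
      ((hh.comp hw.continuous).mul ((hBc.clm_apply hgradw).clm_apply hgradw))
      (fun y => mul_nonneg (hh0 _) (hnonneg y _)) (fun η hη hηc => ?_) x
    rw [mul_assoc]
    exact hweak.integral_sq_mul_energy_le hBc hsymm hnonneg hw
      (fun s => (hh.integral_hasStrictDerivAt 0 s).hasDerivAt) hh hh0
      (abs_intervalIntegral_le_integral hh0 hint 0) hBh hη hηc
  rcases mul_eq_zero.1 henergy with hzero | hzero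
  · refine le_antisymm ?_ (hnonneg x _)
    simpa only [hzero, zero_mul] using hBh x (∇ w x)
  · exact hzero

end Liouville

section Growth

lemma log_two_add_div_one_add_le {δ P : ℝ} (hδ : 0 < δ) (hP : 0 ≤ P) :
    log (2 + P) / (1 + P) ≤ 2 ^ δ / δ * (1 + P) ^ (δ - 1) := by
  have hP1 : 0 < 1 + P := by linarith
  rw [rpow_sub_one hP1.ne', ← mul_div_assoc]
  gcongr
  calc log (2 + P) ≤ (2 + P) ^ δ / δ := log_le_rpow_div (by linarith) hδ
    _ ≤ (2 * (1 + P)) ^ δ / δ := by gcongr; linarith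
    _ = 2 ^ δ / δ * (1 + P) ^ δ := by rw [mul_rpow two_pos.le hP1.le]; ring

lemma one_add_le_mul_one_add_rpow {m K P s : ℝ} (hm : 0 ≤ m) (hK : 0 ≤ K) (hP : 0 ≤ P)
    (hs : s ≤ K * (P ^ m + 1)) : 1 + s ≤ (1 + 2 * K) * (1 + P) ^ m := by
  have hone : 1 ≤ (1 + P) ^ m := one_le_rpow (by linarith) hm
  have hPm : P ^ m ≤ (1 + P) ^ m := rpow_le_rpow hP (by linarith) hm
  nlinarith

/-- Any exponent `r > 1` with `m * r < 1` works, the room left by `m * r < 1` absorbing the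
logarithm; `r = 2 / (1 + m)` is one such choice. -/
lemma exists_log_two_add_div_one_add_le_one_add_abs_rpow {m K : ℝ} (hm0 : 0 ≤ m) (hm1 : m < 1)
    (hK : 0 ≤ K) : ∃ r C : ℝ, 1 < r ∧ 0 ≤ C ∧ ∀ P s : ℝ, 0 ≤ P → |s| ≤ K * (P ^ m + 1) →
      log (2 + P) / (1 + P) ≤ C * (1 + |s|) ^ (-r) := by
  set r := 2 / (1 + m)
  have hr : 1 < r := by rw [one_lt_div (by linarith)]; linarith
  have hmr : m * r < 1 := by rw [← mul_div_assoc, div_lt_one (by linarith)]; linarith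
  have hδ : 0 < 1 - m * r := by linarith
  refine ⟨r, 2 ^ (1 - m * r) / (1 - m * r) * (1 + 2 * K) ^ r, hr, by positivity,
    fun P s hP hs => ?_⟩
  have hP1 : 0 ≤ 1 + P := by linarith
  have hpow : (1 + |s|) ^ r ≤ (1 + P) ^ (m * r) * (1 + 2 * K) ^ r := by
    rw [rpow_mul hP1, ← mul_rpow (by positivity) (by positivity), mul_comm]
    exact rpow_le_rpow (by positivity) (one_add_le_mul_one_add_rpow hm0 hK hP hs) (by linarith)
  have hinv : (1 + P) ^ (-(m * r)) ≤ (1 + 2 * K) ^ r * (1 + |s|) ^ (-r) := by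
    rwa [rpow_neg hP1, rpow_neg (by positivity), ← div_eq_mul_inv, le_div_iff₀ (by positivity),
      inv_mul_le_iff₀ (by positivity)]
  calc log (2 + P) / (1 + P)
      ≤ 2 ^ (1 - m * r) / (1 - m * r) * (1 + P) ^ (1 - m * r - 1) :=
        log_two_add_div_one_add_le hδ hP
    _ = 2 ^ (1 - m * r) / (1 - m * r) * (1 + P) ^ (-(m * r)) := by rw [sub_sub_cancel_left]
    _ ≤ 2 ^ (1 - m * r) / (1 - m * r) * ((1 + 2 * K) ^ r * (1 + |s|) ^ (-r)) := by gcongr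
    _ = 2 ^ (1 - m * r) / (1 - m * r) * (1 + 2 * K) ^ r * (1 + |s|) ^ (-r) :=
        (mul_assoc _ _ _).symm

lemma exists_integrable_log_two_add_div_one_add_le {m K : ℝ} (hm0 : 0 ≤ m) (hm1 : m < 1)
    (hK : 0 ≤ K) : ∃ h : ℝ → ℝ, Continuous h ∧ (∀ s, 0 ≤ h s) ∧ Integrable h ∧
      ∀ P s : ℝ, 0 ≤ P → |s| ≤ K * (P ^ m + 1) → log (2 + P) / (1 + P) ≤ h s := by
  obtain ⟨r, C, hr, hC, hle⟩ := exists_log_two_add_div_one_add_le_one_add_abs_rpow hm0 hm1 hK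
  refine ⟨fun s => C * (1 + |s|) ^ (-r), ?_, fun s => by positivity, ?_, hle⟩
  · exact continuous_const.mul ((continuous_const.add continuous_abs).rpow_const fun s =>
      .inl (by positivity : 1 + |s| ≠ 0))
  · exact (integrable_one_add_norm (by simpa using hr)).const_mul C

end Growth

lemma Hess_eq_fderiv (f : E2 → ℝ) (p q : E2) : Hess f p q = fderiv ℝ (fderiv ℝ f) p q q := by
  simp [Hess, iteratedFDeriv_two_apply]

lemma abs_pd_le_norm_gradient (u : E2 → ℝ) (i : Fin 2) (x : E2) : |pd u i x| ≤ ‖∇ u x‖ := by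
  have hee : ‖ee i‖ = 1 := by simp [ee]
  calc |pd u i x| = |⟪∇ u x, ee i⟫_ℝ| := by rw [inner_gradient_left, pd]
    _ ≤ ‖∇ u x‖ * ‖ee i‖ := abs_real_inner_le_norm _ _
    _ = ‖∇ u x‖ := by rw [hee, mul_one]

lemma exists_integrable_forall_hess_le {f u : E2 → ℝ} {lam : ℝ} (hlam : 0 ≤ lam)
    (hgrow : ∀ p q : E2, Hess f p q ≤ lam * (log (2 + ‖p‖) / (1 + ‖p‖)) * ‖q‖ ^ 2)
    {m K : ℝ} (hm0 : 0 ≤ m) (hm1 : m < 1) (hK : 0 ≤ K) {i j : Fin 2}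
    (hbd : ∀ x : E2, |pd u i x| ≤ K * (|pd u j x| ^ m + 1)) :
    ∃ h : ℝ → ℝ, Continuous h ∧ (∀ s, 0 ≤ h s) ∧ Integrable h ∧
      ∀ x q : E2, Hess f (∇ u x) q ≤ h (pd u i x) * ‖q‖ ^ 2 := by
  obtain ⟨h, hh, hh0, hint, hlog⟩ := exists_integrable_log_two_add_div_one_add_le hm0 hm1 hK
  have hpd (x : E2) : |pd u i x| ≤ K * (‖∇ u x‖ ^ m + 1) := by
    refine (hbd x).trans ?_
    gcongr
    exact abs_pd_le_norm_gradient u j x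
  refine ⟨fun s => lam * h s, hh.const_mul lam, fun s => mul_nonneg hlam (hh0 s),
    hint.const_mul lam, fun x q => (hgrow _ q).trans ?_⟩
  dsimp only
  gcongr
  exact hlog _ _ (norm_nonneg _) (hpd x)

theorem statement5_general {f u : E2 → ℝ} (hf : ContDiff ℝ 2 f) (hu : ContDiff ℝ 2 u)
    (heq : solves f u) (hpos : ∀ x q : E2, q ≠ 0 → 0 < Hess f (∇ u x) q) (e : E2)
    {h : ℝ → ℝ} (hh : Continuous h) (hh0 : ∀ s, 0 ≤ h s) (hint : Integrable h)
    (hgrow : ∀ x q : E2, Hess f (∇ u x) q ≤ h (fderiv ℝ u x e) * ‖q‖ ^ 2) :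
    ∃ a : ℝ, ∀ x : E2, fderiv ℝ u x e = a := by
  simp only [Hess_eq_fderiv] at hpos hgrow
  have hw : ContDiff ℝ 1 fun x => fderiv ℝ u x e :=
    (hu.fderiv_right (by norm_num)).clm_apply contDiff_const
  have hD2f : Continuous (fderiv ℝ (fderiv ℝ f)) :=
    (hf.fderiv_right (m := 1) (by norm_num)).continuous_fderiv one_ne_zero
  have hnonneg (x q : E2) : 0 ≤ fderiv ℝ (fderiv ℝ f) (∇ u x) q q := by
    rcases eq_or_ne q 0 with rfl | hq
    exacts [by simp, (hpos x q hq).le]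
  have hweak := isWeakSolution_fderiv_apply (EuclideanSpace.basisFun (Fin 2) ℝ) hf hu
    (by simpa only [EuclideanSpace.basisFun_apply, solves, ee] using heq) e
  have henergy := hweak.energy_eq_zero finrank_euclideanSpace_fin
    (hD2f.comp (continuous_gradient (hu.of_le one_le_two)))
    (fun x => fderiv_fderiv_comm hf (∇ u x)) hnonneg hw hh hh0 hint hgrow
  have hfderiv (x : E2) : fderiv ℝ (fun y => fderiv ℝ u y e) x = 0 :=
    gradient_eq_zero_iff.1 (by_contra fun hne => (hpos _ _ hne).ne' (henergy x))
  exact ⟨fderiv ℝ u 0 e, fun x =>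
    is_const_of_fderiv_eq_zero (hw.differentiable one_ne_zero) hfderiv x 0⟩

theorem statement5 (f u : E2 → ℝ)
    (hf : ContDiff ℝ 2 f)
    (hpos : ∀ p q : E2, q ≠ 0 → 0 < Hess f p q)
    (lam : ℝ) (hlam : 0 < lam)
    (hgrow : ∀ p q : E2, Hess f p q ≤ lam * (Real.log (2 + ‖p‖) / (1 + ‖p‖)) * ‖q‖ ^ 2)
    (hu : ContDiff ℝ 2 u) (heq : solves f u)
    (m K : ℝ) (hm0 : 0 ≤ m) (hm1 : m < 1) (hK : 0 < K)
    (hbd : ∀ x : E2, |pd u 0 x| ≤ K * (|pd u 1 x| ^ m + 1)) :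
    ∃ a : ℝ, ∀ x : E2, pd u 0 x = a := by
  obtain ⟨h, hh, hh0, hint, hle⟩ :=
    exists_integrable_forall_hess_le hlam.le hgrow hm0 hm1 hK.le hbd
  exact statement5_general hf hu heq (fun x => hpos (∇ u x)) (ee 0) hh hh0 hint hle
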